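/- Each of the eight polynomials S₁,₂ = F₁F₂ + 2S, S₂,₃ = F₂F₃ + 2S, S₃,₄ = F₃F₄ + 2S, S₅,₆ = F₅F₆ + 2S, S₁,₂,₃ = F₁F₂F₃ + S·R₁, S₄,₅,₆ = F₄F₅F₆ + S·R₂, S₃,₄,₅,₆ = F₃F₄F₅F₆ + S·R, S₂,₃,₄,₅,₆ = F₂F₃F₄F₅F₆ + R₁·S·R defines a smooth surface in ℙ³(ℂ): the only common zero in ℂ⁴ of the four partial derivatives of each of these polynomials is the point 0. -/

import Mathlib

open MvPolynomial

/-- The quadric `S = y₀·y₁ − y₂·y₃`. -/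
noncomputable def polyS : MvPolynomial (Fin 4) ℂ := X 0 * X 1 - X 2 * X 3

/-- The six linear forms `F₁, …, F₆` (indexed by `Fin 6`). -/
noncomputable def polyF : Fin 6 → MvPolynomial (Fin 4) ℂ :=
  ![X 0,
    X 1,
    4 * X 0 - 2 * X 2 - 2 * X 3 + X 1,
    X 0 - 2 * X 2 - 2 * X 3 + 4 * X 1,
    X 0 + X 2 + X 3 + X 1,
    X 0 - X 2 - X 3 + X 1]
/-- The quadric `R = y₀² + y₁² + y₂² + y₃²`. -/
noncomputable def polyR : MvPolynomial (Fin 4) ℂ := X 0 ^ 2 + X 1 ^ 2 + X 2 ^ 2 + X 3 ^ 2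

/-- The linear form `R₁ = y₀ + 2y₂ + 3y₃ + 4y₁`. -/
noncomputable def polyR1 : MvPolynomial (Fin 4) ℂ := X 0 + 2 * X 2 + 3 * X 3 + 4 * X 1

/-- The linear form `R₂ = 4y₀ + 3y₂ + 2y₃ + y₁`. -/
noncomputable def polyR2 : MvPolynomial (Fin 4) ℂ := 4 * X 0 + 3 * X 2 + 2 * X 3 + X 1

noncomputable def polyS12 : MvPolynomial (Fin 4) ℂ := polyF 0 * polyF 1 + 2 * polyS
noncomputable def polyS23 : MvPolynomial (Fin 4) ℂ := polyF 1 * polyF 2 + 2 * polyS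
noncomputable def polyS34 : MvPolynomial (Fin 4) ℂ := polyF 2 * polyF 3 + 2 * polyS
noncomputable def polyS56 : MvPolynomial (Fin 4) ℂ := polyF 4 * polyF 5 + 2 * polyS
noncomputable def polyS123 : MvPolynomial (Fin 4) ℂ := polyF 0 * polyF 1 * polyF 2 + polyS * polyR1
noncomputable def polyS456 : MvPolynomial (Fin 4) ℂ := polyF 3 * polyF 4 * polyF 5 + polyS * polyR2
noncomputable def polyS3456 : MvPolynomial (Fin 4) ℂ :=
  polyF 2 * polyF 3 * polyF 4 * polyF 5 + polyS * polyR
noncomputable def polyS23456 : MvPolynomial (Fin 4) ℂ :=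
  polyF 1 * polyF 2 * polyF 3 * polyF 4 * polyF 5 + polyR1 * polyS * polyR

/-!
A common zero over `K` of the partial derivatives, all of them forms over `ℤ`, can be rescaled to a
primitive vector over a valuation ring of `K` dominating `ℤ` at a prime `p`; its reduction is then a
nontrivial common zero over the residue field. So it is enough to find a prime of good reduction,
where the coefficients met in the elimination stay bounded. The prime `29` serves all eight
surfaces, and there the partial derivatives are shown by Gröbner basis computations to have no
common zero in the chart `y₀ = 1` and only the trivial one on the hyperplane `y₀ = 0`.
-/

section Forms

variable {σ ι R S K : Type*}

theorem aeval_smul_of_isHomogeneous [CommSemiring R] [CommSemiring S] [Algebra R S] {n : ℕ}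
    {f : MvPolynomial σ R} (hf : f.IsHomogeneous n) (c : S) (x : σ → S) :
    aeval (c • x) f = c ^ n * aeval x f := by
  simp_rw [aeval_def, eval₂_eq, Finset.mul_sum]
  refine Finset.sum_congr rfl fun m hm ↦ ?_
  have hdeg : ∑ i ∈ m.support, m i = n := by
    simpa [Finsupp.weight_apply, Finsupp.sum] using hf (mem_support_iff.1 hm)
  simp only [Pi.smul_apply, smul_eq_mul, mul_pow, Finset.prod_mul_distrib,
    Finset.prod_pow_eq_pow_sum, hdeg]
  ring

/-- A system of polynomials whose only common zero with coordinates in `K` is the origin; for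
forms, the projective scheme they define has no `K`-points. -/
def HasOnlyTrivialZero (K : Type*) [CommSemiring R] [CommSemiring K] [Algebra R K]
    (f : ι → MvPolynomial σ R) : Prop :=
  ∀ x : σ → K, (∀ j, aeval x (f j) = 0) → x = 0

/-- The Jacobian condition: the affine cone over the hypersurface `G = 0` has no `K`-point other
than the origin at which all partial derivatives of `G` vanish. Only `K`-points are tested, so this
is geometric smoothness when `K` is algebraically closed. -/
def IsSmoothOver (K : Type*) [CommSemiring R] [CommSemiring K] [Algebra R K]
    (G : MvPolynomial σ R) : Prop :=
  HasOnlyTrivialZero K fun i ↦ pderiv i G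

theorem isSmoothOver_map_algebraMap_iff [CommSemiring R] [CommSemiring S] [CommSemiring K]
    [Algebra R S] [Algebra S K] [Algebra R K] [IsScalarTower R S K] {G : MvPolynomial σ R} :
    IsSmoothOver K (map (algebraMap R S) G) ↔ IsSmoothOver K G := by
  simp only [IsSmoothOver, HasOnlyTrivialZero, pderiv_map, aeval_map_algebraMap]

theorem hasOnlyTrivialZero_of_chart_of_hyperplane [CommSemiring R] [Field K] [Algebra R K]
    {n : ℕ} {f : ι → MvPolynomial (Fin (n + 1)) R} {d : ι → ℕ} (hf : ∀ j, (f j).IsHomogeneous (d j))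
    (hchart : ∀ y : Fin n → K, ¬ ∀ j, aeval (Matrix.vecCons 1 y) (f j) = 0)
    (hplane : ∀ y : Fin n → K, (∀ j, aeval (Matrix.vecCons 0 y) (f j) = 0) → y = 0) :
    HasOnlyTrivialZero K f := by
  intro x hx
  have hx₀ : x 0 = 0 := by
    by_contra hne
    refine hchart ((x 0)⁻¹ • Matrix.vecTail x) fun j ↦ ?_
    have hcons : Matrix.vecCons 1 ((x 0)⁻¹ • Matrix.vecTail x) = (x 0)⁻¹ • x := by
      rw [← inv_mul_cancel₀ hne, ← smul_eq_mul, ← Matrix.smul_cons]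
      exact congrArg _ (Matrix.cons_head_tail x)
    rw [hcons, aeval_smul_of_isHomogeneous (hf j), hx, mul_zero]
  rw [← Matrix.cons_head_tail x, Matrix.vecHead, hx₀] at hx ⊢
  rw [hplane _ hx, Matrix.cons_zero_zero]

theorem isSmoothOver_of_chart_of_hyperplane [CommSemiring R] [Field K] [Algebra R K]
    {G : MvPolynomial (Fin 4) R} {n : ℕ} (hG : G.IsHomogeneous n)
    (hchart : ∀ b c d : K,
      aeval ![1, b, c, d] (pderiv 0 G) = 0 → aeval ![1, b, c, d] (pderiv 1 G) = 0 →
      aeval ![1, b, c, d] (pderiv 2 G) = 0 → aeval ![1, b, c, d] (pderiv 3 G) ≠ 0)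
    (hplane : ∀ b c d : K,
      aeval ![0, b, c, d] (pderiv 0 G) = 0 → aeval ![0, b, c, d] (pderiv 1 G) = 0 →
      aeval ![0, b, c, d] (pderiv 2 G) = 0 → aeval ![0, b, c, d] (pderiv 3 G) = 0 →
      b = 0 ∧ c = 0 ∧ d = 0) :
    IsSmoothOver K G := by
  have hcoord (y : Fin 3 → K) : ∃ b c d, y = ![b, c, d] := ⟨_, _, _, List.ofFn_inj.1 rfl⟩
  refine hasOnlyTrivialZero_of_chart_of_hyperplane (fun i ↦ hG.pderiv (i := i))
    (fun y h ↦ ?_) fun y h ↦ ?_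
  · obtain ⟨b, c, d, rfl⟩ := hcoord y
    exact hchart b c d (h 0) (h 1) (h 2) (h 3)
  · obtain ⟨b, c, d, rfl⟩ := hcoord y
    obtain ⟨rfl, rfl, rfl⟩ := hplane b c d (h 0) (h 1) (h 2) (h 3)
    simp

end Forms

section Specialization

universe u

variable {σ ι R : Type*} {K : Type u} [Field K]

theorem exists_valuationSubring_of_ker_le [CommRing R] [Algebra R K] {I : Ideal R}
    (hker : RingHom.ker (algebraMap R K) ≤ I) (hI : I ≠ ⊤) :
    ∃ B : ValuationSubring K,
      (algebraMap R K).range ≤ B.toSubring ∧ ∀ r ∈ I, algebraMap R K r ∈ B.nonunits := by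
  let φ : R →+* (algebraMap R K).range := (algebraMap R K).rangeRestrict
  have hφI : I.map φ ≠ ⊤ := by
    rwa [Ne, Ideal.map_eq_top_iff_of_ker_le φ ((algebraMap R K).ker_rangeRestrict.trans_le hker)
      (φ.isIntegral_of_surjective (algebraMap R K).rangeRestrict_surjective)]
  obtain ⟨B, hAB, hB⟩ := Ideal.image_subset_nonunits_valuationSubring (I.map φ) hφI
  exact ⟨B, hAB, fun r hr ↦ hB ⟨φ r, Ideal.mem_map_of_mem φ hr, rfl⟩⟩

theorem exists_smul_eq_coe_of_ne_zero [Finite σ] (B : ValuationSubring K) {x : σ → K}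
    (hx : x ≠ 0) : ∃ (c : K) (y : σ → B), c • x = (fun i ↦ (y i : K)) ∧ ∃ j, y j = 1 := by
  obtain ⟨i₀, hi₀⟩ := Function.ne_iff.1 hx
  have : Nonempty σ := ⟨i₀⟩
  obtain ⟨j, hj⟩ := Finite.exists_max fun i ↦ B.valuation (x i)
  have hxj : x j ≠ 0 := fun h ↦ hi₀ (by simpa [h] using hj i₀)
  have hmem (i : σ) : (x j)⁻¹ * x i ∈ B := by
    rw [← B.valuation_le_one_iff, map_mul, map_inv₀, mul_comm, ← div_eq_mul_inv]
    exact div_le_one_of_le₀ (hj i) zero_le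
  exact ⟨(x j)⁻¹, fun i ↦ ⟨_, hmem i⟩, rfl, j, Subtype.ext (inv_mul_cancel₀ hxj)⟩

theorem HasOnlyTrivialZero.of_specialization [Finite σ] [CommRing R] [Algebra R K]
    {f : ι → MvPolynomial σ R} {d : ι → ℕ} (hf : ∀ j, (f j).IsHomogeneous (d j))
    {I : Ideal R} (hker : RingHom.ker (algebraMap R K) ≤ I) (hI : I ≠ ⊤)
    (hk : ∀ (k : Type u) [Field k] [Algebra R k],
      (∀ r ∈ I, algebraMap R k r = 0) → HasOnlyTrivialZero k f) :
    HasOnlyTrivialZero K f := by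
  intro x hx
  by_contra hne
  obtain ⟨B, hRB, hIB⟩ := exists_valuationSubring_of_ker_le hker hI
  let : Algebra R B :=
    ((algebraMap R K).codRestrict B.toSubring fun r ↦ hRB ⟨r, rfl⟩).toAlgebra
  have : IsScalarTower R B K := .of_algebraMap_eq fun _ ↦ rfl
  obtain ⟨c, y, hy, j, hj⟩ := exists_smul_eq_coe_of_ne_zero B hne
  have hyf (i : ι) : aeval y (f i) = 0 := by
    apply FaithfulSMul.algebraMap_injective B K
    rw [map_zero, ← aeval_algebraMap_apply]
    calc aeval (algebraMap B K ∘ y) (f i) = aeval (c • x) (f i) := by rw [hy]; rfl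
      _ = 0 := by rw [aeval_smul_of_isHomogeneous (hf i), hx, mul_zero]
  have hI₀ (r : R) (hr : r ∈ I) : algebraMap R (IsLocalRing.ResidueField B) r = 0 :=
    IsLocalRing.residue_eq_zero_iff _ |>.2 <|
      (ValuationSubring.coe_mem_nonunits_iff (a := algebraMap R B r)).1 (hIB r hr)
  have hres : algebraMap B (IsLocalRing.ResidueField B) ∘ y = 0 :=
    hk _ hI₀ _ fun i ↦ (aeval_algebraMap_apply ..).trans (by rw [hyf, map_zero])
  simpa [hj] using congrFun hres j

theorem IsSmoothOver.of_charP [Finite σ] [CharZero K] {p : ℕ} [Fact p.Prime] {n : ℕ}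
    {G : MvPolynomial σ ℤ} (hG : G.IsHomogeneous n)
    (hk : ∀ (k : Type u) [Field k] [CharP k p], IsSmoothOver k G) : IsSmoothOver K G := by
  have hI : Ideal.span {(p : ℤ)} ≠ ⊤ := by
    rw [Ne, Ideal.span_singleton_eq_top]
    exact (Nat.prime_iff_prime_int.1 Fact.out).not_isUnit
  have hker : RingHom.ker (algebraMap ℤ K) ≤ Ideal.span {(p : ℤ)} := by
    rw [(RingHom.injective_iff_ker_eq_bot _).1 (algebraMap ℤ K).injective_int]
    exact bot_le
  refine .of_specialization (fun i ↦ hG.pderiv (i := i)) hker hI fun k _ inst hpk ↦ ?_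
  obtain rfl : inst = Ring.toIntAlgebra k := Subsingleton.elim _ _
  have : CharP k p := (CharP.charP_iff_prime_eq_zero Fact.out).2 <| by
    simpa using hpk p (Ideal.mem_span_singleton_self _)
  exact hk k

end Specialization

section LinearForms

variable {m n R S : Type*} [Fintype n] [CommSemiring R]

theorem pderiv_matrix_toMvPolynomial (M : Matrix m n R) (i : m) (j : n) :
    pderiv j (M.toMvPolynomial i) = C (M i j) := by
  classical
  simp [Matrix.toMvPolynomial, ← C_mul_X_eq_monomial, pderiv_X, Pi.single_apply]

theorem aeval_matrix_toMvPolynomial [CommSemiring S] [Algebra R S] (M : Matrix m n R) (i : m)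
    (x : n → S) : aeval x (M.toMvPolynomial i) = ∑ j, algebraMap R S (M i j) * x j := by
  simp [Matrix.toMvPolynomial, ← C_mul_X_eq_monomial]

end LinearForms

/-- The coefficients of `F₁, …, F₆`, one form per row, with respect to `y₀, y₁, y₂, y₃` in this
order. -/
def matrixF : Matrix (Fin 6) (Fin 4) ℤ :=
  !![1, 0, 0, 0;
     0, 1, 0, 0;
     4, 1, -2, -2;
     1, 4, -2, -2;
     1, 1, 1, 1;
     1, 1, -1, -1]

/-- The coefficients of `R₁` and `R₂`, one form per row, with respect to `y₀, y₁, y₂, y₃` in this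
order. -/
def matrixR : Matrix (Fin 2) (Fin 4) ℤ :=
  !![1, 4, 2, 3;
     4, 1, 3, 2]

/-- The linear forms `F₁, …, F₆` over `ℤ`, numbered from `0` as in `polyF`. -/
noncomputable def formF (j : Fin 6) : MvPolynomial (Fin 4) ℤ := matrixF.toMvPolynomial j

/-- The linear forms `R₁` and `R₂` over `ℤ`, numbered from `0`. -/
noncomputable def formR (j : Fin 2) : MvPolynomial (Fin 4) ℤ := matrixR.toMvPolynomial j

/-- The quadric `S` over `ℤ`. -/
noncomputable def quadricS : MvPolynomial (Fin 4) ℤ := X 0 * X 1 - X 2 * X 3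

/-- The quadric `R` over `ℤ`. -/
noncomputable def quadricR : MvPolynomial (Fin 4) ℤ := ∑ i, X i ^ 2

/-- The common shape `∏ F_j + S * T` of the eight surfaces, over `ℤ`; the list `s` holds the indices
of the factors `F_j`, numbered from `0`. -/
noncomputable def surfaceForm (s : List (Fin 6)) (T : MvPolynomial (Fin 4) ℤ) :
    MvPolynomial (Fin 4) ℤ :=
  (s.map formF).prod + quadricS * T

section Values

variable {k : Type*} [CommRing k] (a b c d : k)

theorem aeval_formF (j : Fin 6) : aeval ![a, b, c, d] (formF j) =
    ![a, b, 4 * a + b - 2 * c - 2 * d, a + 4 * b - 2 * c - 2 * d,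
      a + b + c + d, a + b - c - d] j := by
  fin_cases j <;> simp [formF, matrixF, aeval_matrix_toMvPolynomial, Fin.sum_univ_four] <;> ring

theorem aeval_formR (j : Fin 2) : aeval ![a, b, c, d] (formR j) =
    ![a + 4 * b + 2 * c + 3 * d, 4 * a + b + 3 * c + 2 * d] j := by
  fin_cases j <;> simp [formR, matrixR, aeval_matrix_toMvPolynomial, Fin.sum_univ_four]

theorem aeval_quadricS : aeval ![a, b, c, d] quadricS = a * b - c * d := by
  simp [quadricS]

theorem aeval_quadricR : aeval ![a, b, c, d] quadricR = a ^ 2 + b ^ 2 + c ^ 2 + d ^ 2 := by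
  simp [quadricR, Fin.sum_univ_four]

theorem aeval_pderiv_formF (x : Fin 4 → k) (i : Fin 4) (j : Fin 6) :
    aeval x (pderiv i (formF j)) = matrixF j i := by
  rw [formF, pderiv_matrix_toMvPolynomial, aeval_C, eq_intCast]

theorem aeval_pderiv_formR (x : Fin 4 → k) (i : Fin 4) (j : Fin 2) :
    aeval x (pderiv i (formR j)) = matrixR j i := by
  rw [formR, pderiv_matrix_toMvPolynomial, aeval_C, eq_intCast]

theorem aeval_pderiv_quadricS (i : Fin 4) :
    aeval ![a, b, c, d] (pderiv i quadricS) = ![b, a, -d, -c] i := by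
  fin_cases i <;> simp [quadricS, pderiv_X]

theorem aeval_pderiv_quadricR (i : Fin 4) :
    aeval ![a, b, c, d] (pderiv i quadricR) = 2 * ![a, b, c, d] i := by
  simp [quadricR, pderiv_X, Pi.single_apply]

end Values

theorem isHomogeneous_quadricS : quadricS.IsHomogeneous 2 :=
  ((isHomogeneous_X ℤ 0).mul (isHomogeneous_X ℤ 1)).sub
    ((isHomogeneous_X ℤ 2).mul (isHomogeneous_X ℤ 3))

theorem isHomogeneous_quadricR : quadricR.IsHomogeneous 2 :=
  .sum _ _ _ fun i _ ↦ isHomogeneous_X_pow i 2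

theorem isHomogeneous_formF (j : Fin 6) : (formF j).IsHomogeneous 1 :=
  matrixF.toMvPolynomial_isHomogeneous j

theorem isHomogeneous_formR (j : Fin 2) : (formR j).IsHomogeneous 1 :=
  matrixR.toMvPolynomial_isHomogeneous j

theorem isHomogeneous_prod_map_formF (s : List (Fin 6)) :
    (s.map formF).prod.IsHomogeneous s.length := by
  induction s with
  | nil => exact isHomogeneous_one _ _
  | cons j s ih =>
    rw [List.map_cons, List.prod_cons, List.length_cons, add_comm]
    exact (isHomogeneous_formF j).mul ih

theorem isHomogeneous_surfaceForm {s : List (Fin 6)} {T : MvPolynomial (Fin 4) ℤ} {n : ℕ}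
    (hs : s.length = 2 + n) (hT : T.IsHomogeneous n) :
    (surfaceForm s T).IsHomogeneous (2 + n) :=
  (hs ▸ isHomogeneous_prod_map_formF s).add (isHomogeneous_quadricS.mul hT)

section GoodReduction

variable {k : Type*} [Field k] [CharP k 29]

theorem isSmoothOver_quadric (i j : Fin 6) : IsSmoothOver k (surfaceForm [i, j] (C 2)) := by
  refine isSmoothOver_of_chart_of_hyperplane
    (isHomogeneous_surfaceForm rfl (isHomogeneous_C _ _))
    (fun b c d h₀ h₁ h₂ h₃ ↦ ?_) fun b c d h₀ h₁ h₂ h₃ ↦ ?_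
  all_goals
    simp only [surfaceForm, List.map_cons, List.map_nil, List.prod_cons, List.prod_nil, mul_one,
      map_add, map_mul, map_zero, Derivation.leibniz, smul_eq_mul, pderiv_C, aeval_C,
      algebraMap_int_eq, Int.coe_castRingHom, aeval_formF, aeval_quadricS, aeval_pderiv_formF,
      aeval_pderiv_quadricS, matrixF, Matrix.of_apply] at h₀ h₁ h₂ h₃
    fin_cases i <;> fin_cases j <;>
      simp only [Fin.reduceFinMk, Fin.zero_eta, Fin.mk_one, Matrix.cons_val, Int.cast_ofNat,
        Int.cast_neg, Int.cast_one, Int.cast_zero] at h₀ h₁ h₂ h₃ <;>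
      grind

theorem isSmoothOver_first_cubic : IsSmoothOver k (surfaceForm [0, 1, 2] (formR 0)) := by
  refine isSmoothOver_of_chart_of_hyperplane
    (isHomogeneous_surfaceForm rfl (isHomogeneous_formR 0))
    (fun b c d h₀ h₁ h₂ h₃ ↦ ?_) fun b c d h₀ h₁ h₂ h₃ ↦ ?_
  all_goals
    simp only [surfaceForm, List.map_cons, List.map_nil, List.prod_cons, List.prod_nil, mul_one,
      map_add, map_mul, Derivation.leibniz, smul_eq_mul, aeval_formF, aeval_formR, aeval_quadricS,
      aeval_pderiv_formF, aeval_pderiv_formR, aeval_pderiv_quadricS,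
      matrixF, matrixR, Matrix.of_apply, Matrix.cons_val,
      Int.cast_ofNat, Int.cast_neg, Int.cast_one, Int.cast_zero] at h₀ h₁ h₂ h₃
    grind

theorem isSmoothOver_second_cubic : IsSmoothOver k (surfaceForm [3, 4, 5] (formR 1)) := by
  refine isSmoothOver_of_chart_of_hyperplane
    (isHomogeneous_surfaceForm rfl (isHomogeneous_formR 1))
    (fun b c d h₀ h₁ h₂ h₃ ↦ ?_) fun b c d h₀ h₁ h₂ h₃ ↦ ?_
  all_goals
    simp only [surfaceForm, List.map_cons, List.map_nil, List.prod_cons, List.prod_nil, mul_one,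
      map_add, map_mul, Derivation.leibniz, smul_eq_mul, aeval_formF, aeval_formR, aeval_quadricS,
      aeval_pderiv_formF, aeval_pderiv_formR, aeval_pderiv_quadricS,
      matrixF, matrixR, Matrix.of_apply, Matrix.cons_val,
      Int.cast_ofNat, Int.cast_neg, Int.cast_one] at h₀ h₁ h₂ h₃
    grind

theorem isSmoothOver_quartic : IsSmoothOver k (surfaceForm [2, 3, 4, 5] quadricR) := by
  refine isSmoothOver_of_chart_of_hyperplane
    (isHomogeneous_surfaceForm rfl isHomogeneous_quadricR)
    (fun b c d h₀ h₁ h₂ h₃ ↦ ?_) fun b c d h₀ h₁ h₂ h₃ ↦ ?_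
  all_goals
    simp only [surfaceForm, List.map_cons, List.map_nil, List.prod_cons, List.prod_nil, mul_one,
      map_add, map_mul, Derivation.leibniz, smul_eq_mul, aeval_formF, aeval_quadricS,
      aeval_quadricR, aeval_pderiv_formF, aeval_pderiv_quadricS, aeval_pderiv_quadricR,
      matrixF, Matrix.of_apply, Matrix.cons_val,
      Int.cast_ofNat, Int.cast_neg, Int.cast_one] at h₀ h₁ h₂ h₃
    grind

theorem isSmoothOver_quintic :
    IsSmoothOver k (surfaceForm [1, 2, 3, 4, 5] (formR 0 * quadricR)) := by
  refine isSmoothOver_of_chart_of_hyperplane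
    (isHomogeneous_surfaceForm rfl ((isHomogeneous_formR 0).mul isHomogeneous_quadricR))
    (fun b c d h₀ h₁ h₂ h₃ ↦ ?_) fun b c d h₀ h₁ h₂ h₃ ↦ ?_
  all_goals
    simp only [surfaceForm, List.map_cons, List.map_nil, List.prod_cons, List.prod_nil, mul_one,
      map_add, map_mul, Derivation.leibniz, smul_eq_mul, aeval_formF, aeval_formR, aeval_quadricS,
      aeval_quadricR, aeval_pderiv_formF, aeval_pderiv_formR, aeval_pderiv_quadricS,
      aeval_pderiv_quadricR, matrixF, matrixR, Matrix.of_apply, Matrix.cons_val,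
      Int.cast_ofNat, Int.cast_neg, Int.cast_one, Int.cast_zero] at h₀ h₁ h₂ h₃
    grind

end GoodReduction

/-- Integral models of `S₁,₂, S₂,₃, S₃,₄, S₅,₆, S₁,₂,₃, S₄,₅,₆, S₃,₄,₅,₆, S₂,₃,₄,₅,₆`, in the order
of `eight_surfaces_smooth`. -/
noncomputable def surfaceForms : List (MvPolynomial (Fin 4) ℤ) :=
  [surfaceForm [0, 1] (C 2), surfaceForm [1, 2] (C 2), surfaceForm [2, 3] (C 2),
    surfaceForm [4, 5] (C 2), surfaceForm [0, 1, 2] (formR 0), surfaceForm [3, 4, 5] (formR 1),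
    surfaceForm [2, 3, 4, 5] quadricR, surfaceForm [1, 2, 3, 4, 5] (formR 0 * quadricR)]

theorem exists_isHomogeneous_of_mem_surfaceForms {G : MvPolynomial (Fin 4) ℤ}
    (hG : G ∈ surfaceForms) : ∃ n, G.IsHomogeneous n := by
  revert G
  simp only [surfaceForms, List.forall_mem_cons]
  have hquadric (i j : Fin 6) : ∃ n, (surfaceForm [i, j] (C 2)).IsHomogeneous n :=
    ⟨_, isHomogeneous_surfaceForm rfl (isHomogeneous_C _ _)⟩
  exact ⟨hquadric 0 1, hquadric 1 2, hquadric 2 3, hquadric 4 5,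
    ⟨_, isHomogeneous_surfaceForm rfl (isHomogeneous_formR 0)⟩,
    ⟨_, isHomogeneous_surfaceForm rfl (isHomogeneous_formR 1)⟩,
    ⟨_, isHomogeneous_surfaceForm rfl isHomogeneous_quadricR⟩,
    ⟨_, isHomogeneous_surfaceForm rfl ((isHomogeneous_formR 0).mul isHomogeneous_quadricR)⟩,
    List.forall_mem_nil _⟩

theorem isSmoothOver_of_mem_surfaceForms {k : Type*} [Field k] [CharP k 29]
    {G : MvPolynomial (Fin 4) ℤ} (hG : G ∈ surfaceForms) : IsSmoothOver k G := by
  revert G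
  simp only [surfaceForms, List.forall_mem_cons]
  exact ⟨isSmoothOver_quadric 0 1, isSmoothOver_quadric 1 2, isSmoothOver_quadric 2 3,
    isSmoothOver_quadric 4 5, isSmoothOver_first_cubic, isSmoothOver_second_cubic,
    isSmoothOver_quartic, isSmoothOver_quintic, List.forall_mem_nil _⟩

theorem eight_surfaces_smooth_general {K : Type*} [Field K] [CharZero K] :
    ∀ G ∈ surfaceForms, IsSmoothOver K G := fun _ hG ↦
  have : Fact (Nat.Prime 29) := ⟨by norm_num⟩
  have ⟨_, hn⟩ := exists_isHomogeneous_of_mem_surfaceForms hG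
  .of_charP (p := 29) hn fun _ _ _ ↦ isSmoothOver_of_mem_surfaceForms hG

theorem map_formF (i : Fin 6) : map (algebraMap ℤ ℂ) (formF i) = polyF i := by
  fin_cases i <;>
    simp [formF, polyF, matrixF, Matrix.toMvPolynomial, ← C_mul_X_eq_monomial,
      Fin.sum_univ_four] <;>
    ring

theorem map_formR (i : Fin 2) : map (algebraMap ℤ ℂ) (formR i) = ![polyR1, polyR2] i := by
  fin_cases i <;>
    simp [formR, polyR1, polyR2, matrixR, Matrix.toMvPolynomial, ← C_mul_X_eq_monomial,
      Fin.sum_univ_four] <;>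
    ring

theorem map_quadricS : map (algebraMap ℤ ℂ) quadricS = polyS := by
  simp [quadricS, polyS]

theorem map_quadricR : map (algebraMap ℤ ℂ) quadricR = polyR := by
  simp [quadricR, polyR, Fin.sum_univ_four]

theorem map_surfaceForm (s : List (Fin 6)) (T : MvPolynomial (Fin 4) ℤ) :
    map (algebraMap ℤ ℂ) (surfaceForm s T) =
      (s.map polyF).prod + polyS * map (algebraMap ℤ ℂ) T := by
  rw [surfaceForm, map_add, map_mul, map_list_prod, List.map_map, map_quadricS]
  exact congrArg (fun l : List _ ↦ l.prod + _) (List.map_congr_left fun i _ ↦ map_formF i)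

theorem map_surfaceForms : surfaceForms.map (map (algebraMap ℤ ℂ)) =
    [polyS12, polyS23, polyS34, polyS56, polyS123, polyS456, polyS3456, polyS23456] := by
  simp [-algebraMap_int_eq, surfaceForms, map_surfaceForm, map_formR, map_quadricR, polyS12,
    polyS23, polyS34, polyS56, polyS123, polyS456, polyS3456, polyS23456, mul_assoc,
    mul_left_comm polyS, mul_comm polyS]

/-- Each of the eight auxiliary surfaces `S₁,₂, S₂,₃, S₃,₄, S₅,₆, S₁,₂,₃, S₄,₅,₆,
S₃,₄,₅,₆, S₂,₃,₄,₅,₆` is smooth: the only common zero in `ℂ⁴` of the four partial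
derivatives of its defining polynomial is `0`. -/
theorem eight_surfaces_smooth :
    ∀ G ∈ [polyS12, polyS23, polyS34, polyS56, polyS123, polyS456, polyS3456, polyS23456],
      ∀ x : Fin 4 → ℂ, (∀ i : Fin 4, eval x (pderiv i G) = 0) → x = 0 := by
  intro G hG
  rw [← map_surfaceForms] at hG
  obtain ⟨H, hH, rfl⟩ := List.mem_map.1 hG
  exact isSmoothOver_map_algebraMap_iff.2 (eight_surfaces_smooth_general H hH)
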